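/- Let ρ be a density matrix on a finite-dimensional complex Hilbert space, and let λ_1↓(ρ) be its largest eigenvalue. Then H_B(λ_1↓(ρ)) ≤ S(ρ), where H_B is the binary entropy and S is the von Neumann entropy. -/

import Mathlib

/-!
The inequality is the grouping property of Shannon entropy: merging all outcomes other than a fixed
one `i` into a single outcome of probability `s = 1 - p i` cannot increase the entropy, because
`-p j log p j ≥ -p j log s` for each `j ≠ i`, by monotonicity of the logarithm. This holds for every
outcome `i`, so all that is used about `eigD ρ 0` is that it is one of the eigenvalues of `ρ`, which
form a probability vector (`binEntropy_le_sum`, `exists_eigD_zero_eq`).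
-/

open scoped BigOperators ComplexOrder
open Matrix

noncomputable section
attribute [local instance] Classical.propDecidable

/-- The binary entropy function (natural logarithm; `Real.log 0 = 0` gives the
conventions `H_B(0) = H_B(1) = 0` automatically). -/
def binEntropy (t : ℝ) : ℝ :=
  -(t * Real.log t) - (1 - t) * Real.log (1 - t)

/-- The `k`-th largest eigenvalue (`k` counted from `0`) of a Hermitian matrix;
junk value `0` if the matrix is not Hermitian or `k` is out of range. -/
def eigD {D : ℕ} (M : Matrix (Fin D) (Fin D) ℂ) (k : ℕ) : ℝ :=
  if h : M.IsHermitian then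
    (((List.ofFn h.eigenvalues).insertionSort (· ≤ ·)).reverse).getD k 0
  else 0

/-- Von Neumann entropy (natural logarithm, convention `0 log 0 = 0`). -/
def vnEntropy {D : ℕ} (M : Matrix (Fin D) (Fin D) ℂ) : ℝ :=
  if h : M.IsHermitian then -∑ i, h.eigenvalues i * Real.log (h.eigenvalues i)
  else 0

/-- The binary entropy of any single entry of a probability vector is at most its Shannon
entropy. -/
theorem binEntropy_le_sum {ι : Type*} [Fintype ι] (p : ι → ℝ) (hp : ∀ i, 0 ≤ p i)
    (hsum : ∑ i, p i = 1) (i : ι) :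
    binEntropy (p i) ≤ -∑ j, p j * Real.log (p j) := by
  have hs : ∑ j ∈ Finset.univ.erase i, p j = 1 - p i := by
    rw [← hsum, ← Finset.add_sum_erase _ p (Finset.mem_univ i)]
    ring
  have key : ∑ j ∈ Finset.univ.erase i, p j * Real.log (p j) ≤
      (1 - p i) * Real.log (1 - p i) := by
    rw [← hs, Finset.sum_mul]
    refine Finset.sum_le_sum fun j hj => ?_
    rcases (hp j).eq_or_lt with h0 | h0
    · simp [← h0]
    · exact mul_le_mul_of_nonneg_left
        (Real.log_le_log h0 (Finset.single_le_sum (fun k _ => hp k) hj)) h0.le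
  rw [← Finset.add_sum_erase _ _ (Finset.mem_univ i)]
  unfold binEntropy
  linarith

/-- In positive dimension index `0` is in range, so `eigD M 0` is an eigenvalue and not the junk
value. -/
theorem exists_eigD_zero_eq {D : ℕ} (hD : 0 < D) {M : Matrix (Fin D) (Fin D) ℂ}
    (h : M.IsHermitian) : ∃ i, h.eigenvalues i = eigD M 0 := by
  rw [eigD, dif_pos h]
  have hlen : 0 < ((List.ofFn h.eigenvalues).insertionSort (· ≤ ·)).reverse.length := by
    simpa using hD
  rw [List.getD_eq_getElem _ _ hlen]
  have hmem := List.getElem_mem hlen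
  rwa [List.mem_reverse, List.mem_insertionSort, List.mem_ofFn'] at hmem

/-- for a density matrix `ρ`, the binary entropy of the largest
eigenvalue of `ρ` is at most the von Neumann entropy of `ρ`. -/
theorem binEntropy_largest_eigenvalue_le_vnEntropy {D : ℕ}
    (ρ : Matrix (Fin D) (Fin D) ℂ) (hρ : ρ.PosSemidef) (htr : ρ.trace = 1) :
    binEntropy (eigD ρ 0) ≤ vnEntropy ρ := by
  have hD : 0 < D := by
    rcases Nat.eq_zero_or_pos D with rfl | h
    · simp [Matrix.trace] at htr
    · exact h
  have h := hρ.isHermitian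
  obtain ⟨i, hi⟩ := exists_eigD_zero_eq hD h
  rw [← hi, vnEntropy, dif_pos h]
  refine binEntropy_le_sum _ hρ.eigenvalues_nonneg ?_ i
  have ht := h.trace_eq_sum_eigenvalues
  rw [htr] at ht
  apply Complex.ofReal_injective
  push_cast
  exact ht.symm

end
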